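/- Let p, q ∈ ℂ and μ ∈ ℂ with Re μ > 0, and assume ∂qθ[p,q](iν) ≠ 0 for every ν with Re ν > 0. Then: F[p,q](i/μ) = −μ^{−2} F[−q,p](iμ); F'[p,q](i/μ) = F'[−q,p](iμ) − 2μ^{−1} F[−q,p](iμ); F''[p,q](i/μ) = −μ² F''[−q,p](iμ) + 2μ F'[−q,p](iμ) − 2 F[−q,p](iμ); F⁽³⁾[p,q](i/μ) = μ⁴ F⁽³⁾[−q,p](iμ); F⁽⁴⁾[p,q](i/μ) = −μ⁶ F⁽⁴⁾[−q,p](iμ) − 4μ⁵ F⁽³⁾[−q,p](iμ). -/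

import Mathlib

noncomputable section

/-- The theta function with characteristics `θ[p,q](iμ)`. -/
def theta (p q μ : ℂ) : ℂ :=
  ∑' m : ℤ, Complex.exp (-(Real.pi : ℂ) * ((m : ℂ) + p) ^ 2 * μ +
    2 * (Real.pi : ℂ) * Complex.I * ((m : ℂ) + p) * q)

/-- The characteristic derivative `∂qθ[p,q](iμ)`. -/
def thetaQ (p q μ : ℂ) : ℂ :=
  2 * (Real.pi : ℂ) * Complex.I *
    ∑' m : ℤ, ((m : ℂ) + p) * Complex.exp (-(Real.pi : ℂ) * ((m : ℂ) + p) ^ 2 * μ +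
      2 * (Real.pi : ℂ) * Complex.I * ((m : ℂ) + p) * q)

/-- The n-th μ-derivative `∂μⁿθ[p,q](iμ)`, given by its absolutely convergent series. -/
def thetaD (n : ℕ) (p q μ : ℂ) : ℂ :=
  (-(Real.pi : ℂ)) ^ n *
    ∑' m : ℤ, ((m : ℂ) + p) ^ (2 * n) *
      Complex.exp (-(Real.pi : ℂ) * ((m : ℂ) + p) ^ 2 * μ +
        2 * (Real.pi : ℂ) * Complex.I * ((m : ℂ) + p) * q)

/-- The n-th μ-derivative `∂μⁿ∂qθ[p,q](iμ)`, given by its absolutely convergent series. -/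
def thetaQD (n : ℕ) (p q μ : ℂ) : ℂ :=
  2 * Complex.I * (-1 : ℂ) ^ n * (Real.pi : ℂ) ^ (n + 1) *
    ∑' m : ℤ, ((m : ℂ) + p) ^ (2 * n + 1) *
      Complex.exp (-(Real.pi : ℂ) * ((m : ℂ) + p) ^ 2 * μ +
        2 * (Real.pi : ℂ) * Complex.I * ((m : ℂ) + p) * q)

/-- The constant `C(j|n) = (−i)ⁿ n! / (2ʲ (n−2j)! (2j)!!)` with `(2j)!! = 2ʲ j!`. -/
def Ccoef (j n : ℕ) : ℂ :=
  (-Complex.I) ^ n * (n.factorial : ℂ) /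
    ((2 : ℂ) ^ j * ((n - 2 * j).factorial : ℂ) * ((2 : ℂ) ^ j * (j.factorial : ℂ)))

/-- `w₁[p,q](iμ)` of the two-parametric family. -/
def w1 (p q μ : ℂ) : ℂ :=
  -(Complex.I / 2) * theta 0 0 μ * theta 0 (1 / 2) μ * thetaQ p (q + 1 / 2) μ /
    (Complex.exp ((Real.pi : ℂ) * Complex.I * p) * theta p q μ)

/-- `w₂[p,q](iμ)` of the two-parametric family. -/
def w2 (p q μ : ℂ) : ℂ :=
  (Complex.I / 2) * theta (1 / 2) 0 μ * theta 0 (1 / 2) μ *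
    thetaQ (p + 1 / 2) (q + 1 / 2) μ /
    (Complex.exp ((Real.pi : ℂ) * Complex.I * p) * theta p q μ)

/-- `w₃[p,q](iμ)` of the two-parametric family. -/
def w3 (p q μ : ℂ) : ℂ :=
  -(1 / 2 : ℂ) * theta (1 / 2) 0 μ * theta 0 0 μ * thetaQ (p + 1 / 2) q μ / theta p q μ

/-- The conformal factor `F[p,q](iμ)` of the two-parametric family. -/
def Ftwo (Λ p q μ : ℂ) : ℂ :=
  (2 / ((Real.pi : ℂ) * Λ)) * (theta p q μ / thetaQ p q μ) ^ 2

/-- `w₁[q₀](iμ)` of the one-parametric family. -/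
def v1 (q0 μ : ℂ) : ℂ := 1 / (μ + q0) + 2 * thetaD 1 (1 / 2) 0 μ / theta (1 / 2) 0 μ

/-- `w₂[q₀](iμ)` of the one-parametric family. -/
def v2 (q0 μ : ℂ) : ℂ := 1 / (μ + q0) + 2 * thetaD 1 0 0 μ / theta 0 0 μ

/-- `w₃[q₀](iμ)` of the one-parametric family. -/
def v3 (q0 μ : ℂ) : ℂ := 1 / (μ + q0) + 2 * thetaD 1 0 (1 / 2) μ / theta 0 (1 / 2) μ

/-- The conformal factor `F[q₀](iμ) = C(μ+q₀)²` of the one-parametric family. -/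
def Fone (C q0 μ : ℂ) : ℂ := C * (μ + q0) ^ 2

/-- The Seeley–de Witt coefficient `ã₀[p,q](iμ)` of the two-parametric family. -/
def a0two (Λ p q μ : ℂ) : ℂ :=
  4 * Ftwo Λ p q μ ^ 2 * w1 p q μ * w2 p q μ * w3 p q μ

/-- The Seeley–de Witt coefficient `ã₀[q₀](iμ)` of the one-parametric family. -/
def a0one (C q0 μ : ℂ) : ℂ :=
  4 * Fone C q0 μ ^ 2 * v1 q0 μ * v2 q0 μ * v3 q0 μ

/-- The Seeley–de Witt coefficient `ã₂[p,q](iμ)` of the two-parametric family. -/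
def a2two (Λ p q μ : ℂ) : ℂ :=
  -(Ftwo Λ p q μ / 3) * (w1 p q μ ^ 2 + w2 p q μ ^ 2 + w3 p q μ ^ 2) +
  (Ftwo Λ p q μ / 6) *
    ((w1 p q μ ^ 2 * w2 p q μ ^ 2 - deriv (w3 p q) μ ^ 2) / w3 p q μ ^ 2 +
     (w1 p q μ ^ 2 * w3 p q μ ^ 2 - deriv (w2 p q) μ ^ 2) / w2 p q μ ^ 2 +
     (w2 p q μ ^ 2 * w3 p q μ ^ 2 - deriv (w1 p q) μ ^ 2) / w1 p q μ ^ 2) -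
  (Ftwo Λ p q μ / 3) *
    (deriv (w1 p q) μ * deriv (w2 p q) μ / (w1 p q μ * w2 p q μ) +
     deriv (w1 p q) μ * deriv (w3 p q) μ / (w1 p q μ * w3 p q μ) +
     deriv (w2 p q) μ * deriv (w3 p q) μ / (w2 p q μ * w3 p q μ)) +
  (Ftwo Λ p q μ / 3) *
    (iteratedDeriv 2 (w1 p q) μ / w1 p q μ + iteratedDeriv 2 (w2 p q) μ / w2 p q μ +
     iteratedDeriv 2 (w3 p q) μ / w3 p q μ) -
  deriv (Ftwo Λ p q) μ ^ 2 / (2 * Ftwo Λ p q μ) + iteratedDeriv 2 (Ftwo Λ p q) μ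

/-!
Under the substitution `iμ ↦ i/μ` both `θ[p,q]` and `∂qθ[p,q]` pass to the characteristics `[-q,p]`
with the same factor `e^{2πipq} μ^{1/2}`, up to an additional `-iμ` for the latter. This factor
cancels in the quotient, so `F[p,q](iν) = -ν² F[-q,p](i/ν)`: weight `-2` behaviour. Differentiating
`ν² G(1/ν)` repeatedly, the lower order terms cancel at the third derivative, which is Bol's
identity for weight `-2`.
-/

section WeightNegTwo

open Filter Topology

variable {𝕜 E : Type*} [NontriviallyNormedField 𝕜] [NormedAddCommGroup E] [NormedSpace 𝕜 E]
  [CompleteSpace E] {g : 𝕜 → E} {z : 𝕜}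

lemma hasDerivAt_zpow_smul_iteratedDeriv_inv (hz : z ≠ 0) (hg : AnalyticAt 𝕜 g z⁻¹)
    (k : ℤ) (n : ℕ) :
    HasDerivAt (fun w ↦ w ^ k • iteratedDeriv n g w⁻¹)
      (((k : 𝕜) * z ^ (k - 1)) • iteratedDeriv n g z⁻¹ -
        z ^ (k - 2) • iteratedDeriv (n + 1) g z⁻¹) z := by
  have h_diff : HasDerivAt (iteratedDeriv n g) (iteratedDeriv (n + 1) g z⁻¹) z⁻¹ := by
    rw [iteratedDeriv_succ, iteratedDeriv_eq_iterate]
    exact (hg.iterated_deriv n).differentiableAt.hasDerivAt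
  have h_inv : HasDerivAt (fun w ↦ iteratedDeriv n g w⁻¹)
      (-(z ^ 2)⁻¹ • iteratedDeriv (n + 1) g z⁻¹) z :=
    h_diff.scomp z (hasDerivAt_inv hz)
  convert! (hasDerivAt_zpow k z (.inl hz)).smul h_inv using 1
  rw [zpow_sub₀ hz k 2, smul_smul, zpow_ofNat]
  module

lemma eventually_ne_zero_and_analyticAt_inv (hz : z ≠ 0) (hg : AnalyticAt 𝕜 g z⁻¹) :
    ∀ᶠ w in 𝓝 z, w ≠ 0 ∧ AnalyticAt 𝕜 g w⁻¹ :=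
  (eventually_ne_nhds hz).and ((continuousAt_inv₀ hz).eventually hg.eventually_analyticAt)

lemma iteratedDeriv_one_sq_smul_inv (hz : z ≠ 0) (hg : AnalyticAt 𝕜 g z⁻¹) :
    iteratedDeriv 1 (fun w ↦ w ^ 2 • g w⁻¹) z =
      (2 * z) • g z⁻¹ - iteratedDeriv 1 g z⁻¹ := by
  rw [iteratedDeriv_one]
  simpa using (hasDerivAt_zpow_smul_iteratedDeriv_inv hz hg 2 0).deriv

lemma iteratedDeriv_two_sq_smul_inv (hz : z ≠ 0) (hg : AnalyticAt 𝕜 g z⁻¹) :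
    iteratedDeriv 2 (fun w ↦ w ^ 2 • g w⁻¹) z =
      (2 : 𝕜) • g z⁻¹ - (2 * z⁻¹) • iteratedDeriv 1 g z⁻¹ + z⁻¹ ^ 2 • iteratedDeriv 2 g z⁻¹ := by
  have h_one : iteratedDeriv 1 (fun w ↦ w ^ 2 • g w⁻¹) =ᶠ[𝓝 z]
      fun w ↦ (2 : 𝕜) • w ^ (1 : ℤ) • iteratedDeriv 0 g w⁻¹ -
        w ^ (0 : ℤ) • iteratedDeriv 1 g w⁻¹ := by
    filter_upwards [eventually_ne_zero_and_analyticAt_inv hz hg] with w ⟨hw, hgw⟩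
    simpa [smul_smul] using iteratedDeriv_one_sq_smul_inv hw hgw
  have h_deriv (k : ℤ) (n : ℕ) := hasDerivAt_zpow_smul_iteratedDeriv_inv hz hg k n
  rw [iteratedDeriv_succ, h_one.deriv_eq,
    (((h_deriv 1 0).fun_const_smul (2 : 𝕜)).fun_sub (h_deriv 0 1)).deriv]
  simp only [Int.cast_one, Int.cast_zero, Int.reduceSub, zpow_neg, zpow_ofNat, inv_pow,
    iteratedDeriv_zero, Nat.reduceAdd]
  module

lemma iteratedDeriv_three_sq_smul_inv (hz : z ≠ 0) (hg : AnalyticAt 𝕜 g z⁻¹) :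
    iteratedDeriv 3 (fun w ↦ w ^ 2 • g w⁻¹) z = -(z⁻¹ ^ 4 • iteratedDeriv 3 g z⁻¹) := by
  have h_two : iteratedDeriv 2 (fun w ↦ w ^ 2 • g w⁻¹) =ᶠ[𝓝 z]
      fun w ↦ (2 : 𝕜) • w ^ (0 : ℤ) • iteratedDeriv 0 g w⁻¹ -
        (2 : 𝕜) • w ^ (-1 : ℤ) • iteratedDeriv 1 g w⁻¹ + w ^ (-2 : ℤ) • iteratedDeriv 2 g w⁻¹ := by
    filter_upwards [eventually_ne_zero_and_analyticAt_inv hz hg] with w ⟨hw, hgw⟩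
    simpa [smul_smul, zpow_neg] using iteratedDeriv_two_sq_smul_inv hw hgw
  have h_deriv (k : ℤ) (n : ℕ) := hasDerivAt_zpow_smul_iteratedDeriv_inv hz hg k n
  rw [iteratedDeriv_succ, h_two.deriv_eq, ((((h_deriv 0 0).fun_const_smul (2 : 𝕜)).fun_sub
    ((h_deriv (-1) 1).fun_const_smul (2 : 𝕜))).fun_add (h_deriv (-2) 2)).deriv]
  simp only [Int.cast_zero, Int.cast_neg, Int.cast_one, Int.cast_ofNat, Int.reduceSub,
    Int.reduceNeg, zpow_neg, zpow_ofNat, inv_pow, iteratedDeriv_zero, Nat.reduceAdd]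
  module

lemma iteratedDeriv_four_sq_smul_inv (hz : z ≠ 0) (hg : AnalyticAt 𝕜 g z⁻¹) :
    iteratedDeriv 4 (fun w ↦ w ^ 2 • g w⁻¹) z =
      (4 * z⁻¹ ^ 5) • iteratedDeriv 3 g z⁻¹ + z⁻¹ ^ 6 • iteratedDeriv 4 g z⁻¹ := by
  have h_three : iteratedDeriv 3 (fun w ↦ w ^ 2 • g w⁻¹) =ᶠ[𝓝 z]
      fun w ↦ -(w ^ (-4 : ℤ) • iteratedDeriv 3 g w⁻¹) := by
    filter_upwards [eventually_ne_zero_and_analyticAt_inv hz hg] with w ⟨hw, hgw⟩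
    simpa [zpow_neg] using iteratedDeriv_three_sq_smul_inv hw hgw
  rw [iteratedDeriv_succ, h_three.deriv_eq,
    (hasDerivAt_zpow_smul_iteratedDeriv_inv hz hg (-4) 3).fun_neg.deriv]
  simp only [Int.cast_neg, Int.cast_ofNat, Int.reduceSub, Int.reduceNeg, zpow_neg, zpow_ofNat,
    inv_pow, Nat.reduceAdd]
  module

end WeightNegTwo

section JacobiTheta

open Complex

lemma re_inv_pos {μ : ℂ} (hμ : 0 < μ.re) : 0 < (μ⁻¹).re := by
  rw [inv_re]
  exact div_pos hμ (normSq_pos.2 (ne_zero_of_re_pos hμ))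

lemma differentiableOn_jacobiTheta₂_comp {U : Set ℂ} {z τ : ℂ → ℂ} (hz : DifferentiableOn ℂ z U)
    (hτ : DifferentiableOn ℂ τ U) (hτ_pos : ∀ ν ∈ U, 0 < (τ ν).im) :
    DifferentiableOn ℂ (fun ν ↦ jacobiTheta₂ (z ν) (τ ν)) U := fun ν hν ↦
  (hasFDerivAt_jacobiTheta₂ (z ν) (hτ_pos ν hν)).differentiableAt.comp_differentiableWithinAt
    (f := fun ν ↦ (z ν, τ ν)) ν ((hz ν hν).prodMk (hτ ν hν))

lemma differentiableOn_jacobiTheta₂'_comp_of_bounds {U : Set ℂ} (hU : IsOpen U) {z τ : ℂ → ℂ}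
    (hz : DifferentiableOn ℂ z U) (hτ : DifferentiableOn ℂ τ U) {S T : ℝ} (hT : 0 < T)
    (hz_le : ∀ ν ∈ U, |(z ν).im| ≤ S) (hτ_ge : ∀ ν ∈ U, T ≤ (τ ν).im) :
    DifferentiableOn ℂ (fun ν ↦ jacobiTheta₂' (z ν) (τ ν)) U := by
  have h_summable : Summable fun n : ℤ ↦
      2 * Real.pi * |n| * Real.exp (-Real.pi * (T * n ^ 2 - 2 * S * |n|)) := by
    simpa only [mul_assoc, pow_one] using
      (summable_pow_mul_jacobiTheta₂_term_bound S hT 1).mul_left (2 * Real.pi)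
  refine differentiableOn_tsum_of_summable_norm h_summable (fun n ↦ ?_) hU
    fun n ν hν ↦ norm_jacobiTheta₂'_term_le hT (hz_le ν hν) (hτ_ge ν hν) n
  unfold jacobiTheta₂'_term jacobiTheta₂_term
  fun_prop

lemma differentiableOn_jacobiTheta₂'_comp {U : Set ℂ} (hU : IsOpen U) {z τ : ℂ → ℂ}
    (hz : DifferentiableOn ℂ z U) (hτ : DifferentiableOn ℂ τ U) (hτ_pos : ∀ ν ∈ U, 0 < (τ ν).im) :
    DifferentiableOn ℂ (fun ν ↦ jacobiTheta₂' (z ν) (τ ν)) U := by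
  intro ν hν
  obtain ⟨S, hS⟩ := exists_gt |(z ν).im|
  obtain ⟨T, hT, hTν⟩ := exists_between (hτ_pos ν hν)
  have h_z_im : ContinuousOn (fun w ↦ |(z w).im|) U := by
    have := hz.continuousOn
    fun_prop
  have h_τ_im : ContinuousOn (fun w ↦ (τ w).im) U := continuous_im.comp_continuousOn hτ.continuousOn
  let V := (U ∩ (fun w ↦ |(z w).im|) ⁻¹' Set.Iio S) ∩ (U ∩ (fun w ↦ (τ w).im) ⁻¹' Set.Ioi T)
  have hV : IsOpen V := (h_z_im.isOpen_inter_preimage hU isOpen_Iio).inter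
    (h_τ_im.isOpen_inter_preimage hU isOpen_Ioi)
  have hVU : V ⊆ U := fun w hw ↦ hw.1.1
  have h_on_V := differentiableOn_jacobiTheta₂'_comp_of_bounds hV (hz.mono hVU) (hτ.mono hVU) hT
    (fun w hw ↦ hw.1.2.le) fun w hw ↦ hw.2.2.le
  exact (h_on_V.differentiableAt (hV.mem_nhds ⟨⟨hν, hS⟩, hν, hTν⟩)).differentiableWithinAt

lemma one_div_neg_I_mul_I_mul_inv_cpow {μ : ℂ} (hμ : 0 < μ.re) (s : ℂ) :
    1 / (-I * (I * μ⁻¹)) ^ s = μ ^ s := by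
  have h_arg : μ.arg ≠ Real.pi := fun h ↦ hμ.not_gt (arg_eq_pi_iff.1 h).1
  rw [← mul_assoc, neg_mul, I_mul_I, neg_neg, one_mul, inv_cpow μ s h_arg, one_div, inv_inv]

lemma div_I_mul_inv (a μ : ℂ) : a / (I * μ⁻¹) = -I * μ * a := by
  rw [div_eq_mul_inv, mul_inv, inv_inv, inv_I]
  ring

lemma jacobiTheta₂_I_mul_inv {μ : ℂ} (hμ : 0 < μ.re) (z : ℂ) :
    jacobiTheta₂ z (I * μ⁻¹) =
      μ ^ (1 / 2 : ℂ) * cexp (-Real.pi * z ^ 2 * μ) * jacobiTheta₂ (-I * μ * z) (I * μ) := by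
  have h_exp : -I * μ * (-Real.pi * I * z ^ 2) = -Real.pi * z ^ 2 * μ := by
    linear_combination Real.pi * z ^ 2 * μ * I_sq
  have h_τ : -I * μ * -1 = I * μ := by ring
  rw [jacobiTheta₂_functional_equation, one_div_neg_I_mul_I_mul_inv_cpow hμ]
  simp only [div_I_mul_inv, h_exp, h_τ]

lemma jacobiTheta₂'_I_mul_inv {μ : ℂ} (hμ : 0 < μ.re) (z : ℂ) :
    jacobiTheta₂' z (I * μ⁻¹) =
      -I * μ * (μ ^ (1 / 2 : ℂ) * cexp (-Real.pi * z ^ 2 * μ)) *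
        (jacobiTheta₂' (-I * μ * z) (I * μ) -
          2 * Real.pi * I * z * jacobiTheta₂ (-I * μ * z) (I * μ)) := by
  have h_exp : -I * μ * (-Real.pi * I * z ^ 2) = -Real.pi * z ^ 2 * μ := by
    linear_combination Real.pi * z ^ 2 * μ * I_sq
  have h_τ : -I * μ * -1 = I * μ := by ring
  rw [jacobiTheta₂'_functional_equation, one_div_neg_I_mul_I_mul_inv_cpow hμ]
  simp only [div_I_mul_inv, h_exp, h_τ]

end JacobiTheta

section Characteristics

open Complex Topology

lemma exp_eq_exp_mul_jacobiTheta₂_term (p q μ : ℂ) (m : ℤ) :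
    cexp (-(Real.pi : ℂ) * ((m : ℂ) + p) ^ 2 * μ + 2 * (Real.pi : ℂ) * I * ((m : ℂ) + p) * q) =
      cexp (-Real.pi * p ^ 2 * μ + 2 * Real.pi * I * p * q) *
        jacobiTheta₂_term m (q + I * p * μ) (I * μ) := by
  rw [jacobiTheta₂_term, ← Complex.exp_add]
  congr 1
  linear_combination (-2 * Real.pi * m * p * μ - Real.pi * m ^ 2 * μ : ℂ) * I_sq

lemma theta_eq_exp_mul_jacobiTheta₂ (p q μ : ℂ) :
    theta p q μ = cexp (-Real.pi * p ^ 2 * μ + 2 * Real.pi * I * p * q) *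
      jacobiTheta₂ (q + I * p * μ) (I * μ) := by
  simp only [theta, exp_eq_exp_mul_jacobiTheta₂_term, tsum_mul_left, jacobiTheta₂]

lemma thetaQ_eq_exp_mul_jacobiTheta₂' (p q : ℂ) {μ : ℂ} (hμ : 0 < μ.re) :
    thetaQ p q μ = cexp (-Real.pi * p ^ 2 * μ + 2 * Real.pi * I * p * q) *
      (jacobiTheta₂' (q + I * p * μ) (I * μ) +
        2 * Real.pi * I * p * jacobiTheta₂ (q + I * p * μ) (I * μ)) := by
  have hτ : 0 < (I * μ).im := by simpa using hμ
  have h_sum := (hasSum_jacobiTheta₂'_term (q + I * p * μ) hτ).add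
    ((hasSum_jacobiTheta₂_term (q + I * p * μ) hτ).mul_left (2 * Real.pi * I * p))
  rw [← h_sum.tsum_eq, thetaQ, ← tsum_mul_left, ← tsum_mul_left]
  refine tsum_congr fun m ↦ ?_
  rw [exp_eq_exp_mul_jacobiTheta₂_term, jacobiTheta₂'_term]
  ring

lemma differentiableOn_theta (p q : ℂ) : DifferentiableOn ℂ (theta p q) {μ | 0 < μ.re} := by
  have h_jacobi : DifferentiableOn ℂ (fun μ ↦ jacobiTheta₂ (q + I * p * μ) (I * μ))
      {μ | 0 < μ.re} :=
    differentiableOn_jacobiTheta₂_comp (by fun_prop) (by fun_prop) (by simp)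
  rw [funext (theta_eq_exp_mul_jacobiTheta₂ p q)]
  fun_prop

lemma differentiableOn_thetaQ (p q : ℂ) : DifferentiableOn ℂ (thetaQ p q) {μ | 0 < μ.re} := by
  have h_jacobi : DifferentiableOn ℂ (fun μ ↦ jacobiTheta₂ (q + I * p * μ) (I * μ))
      {μ | 0 < μ.re} :=
    differentiableOn_jacobiTheta₂_comp (by fun_prop) (by fun_prop) (by simp)
  have h_jacobi' : DifferentiableOn ℂ (fun μ ↦ jacobiTheta₂' (q + I * p * μ) (I * μ))
      {μ | 0 < μ.re} :=
    differentiableOn_jacobiTheta₂'_comp (isOpen_re_gt 0) (by fun_prop) (by fun_prop) (by simp)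
  refine DifferentiableOn.congr ?_ fun μ hμ ↦ thetaQ_eq_exp_mul_jacobiTheta₂' p q hμ
  fun_prop

lemma exp_mul_exp_sq_inv (p q : ℂ) {μ : ℂ} (hμ : μ ≠ 0) :
    cexp (-Real.pi * p ^ 2 * μ⁻¹ + 2 * Real.pi * I * p * q) *
        cexp (-Real.pi * (q + I * p * μ⁻¹) ^ 2 * μ) =
      cexp (2 * Real.pi * I * p * q) *
        cexp (-Real.pi * (-q) ^ 2 * μ + 2 * Real.pi * I * (-q) * p) := by
  rw [← Complex.exp_add, ← Complex.exp_add]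
  congr 1
  field_simp
  linear_combination -p ^ 2 * I_sq

lemma neg_I_mul_mul_add_inv (p q : ℂ) {μ : ℂ} (hμ : μ ≠ 0) :
    -I * μ * (q + I * p * μ⁻¹) = p + I * -q * μ := by
  field_simp
  linear_combination -p * I_sq

lemma theta_inv (p q : ℂ) {μ : ℂ} (hμ : 0 < μ.re) :
    theta p q μ⁻¹ = cexp (2 * Real.pi * I * p * q) * μ ^ (1 / 2 : ℂ) * theta (-q) p μ := by
  have hμ0 := ne_zero_of_re_pos hμ
  rw [theta_eq_exp_mul_jacobiTheta₂, theta_eq_exp_mul_jacobiTheta₂, jacobiTheta₂_I_mul_inv hμ,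
    neg_I_mul_mul_add_inv p q hμ0]
  linear_combination (μ ^ (1 / 2 : ℂ) * jacobiTheta₂ (p + I * -q * μ) (I * μ)) *
    exp_mul_exp_sq_inv p q hμ0

lemma thetaQ_inv (p q : ℂ) {μ : ℂ} (hμ : 0 < μ.re) :
    thetaQ p q μ⁻¹ =
      cexp (2 * Real.pi * I * p * q) * μ ^ (1 / 2 : ℂ) * (-I * μ * thetaQ (-q) p μ) := by
  have hμ0 := ne_zero_of_re_pos hμ
  rw [thetaQ_eq_exp_mul_jacobiTheta₂' _ _ (re_inv_pos hμ), thetaQ_eq_exp_mul_jacobiTheta₂' _ _ hμ,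
    jacobiTheta₂_I_mul_inv hμ, jacobiTheta₂'_I_mul_inv hμ, neg_I_mul_mul_add_inv p q hμ0]
  set K := jacobiTheta₂ (p + I * -q * μ) (I * μ)
  set K' := jacobiTheta₂' (p + I * -q * μ) (I * μ)
  have h_bracket : -I * μ * (K' - 2 * Real.pi * I * (q + I * p * μ⁻¹) * K) +
      2 * Real.pi * I * p * K = -I * μ * (K' + 2 * Real.pi * I * (-q) * K) := by
    field_simp
    linear_combination (2 * Real.pi * p * K : ℂ) * I_sq
  linear_combination
    μ ^ (1 / 2 : ℂ) * cexp (-Real.pi * p ^ 2 * μ⁻¹ + 2 * Real.pi * I * p * q) *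
        cexp (-Real.pi * (q + I * p * μ⁻¹) ^ 2 * μ) * h_bracket +
      μ ^ (1 / 2 : ℂ) * (-I * μ * (K' + 2 * Real.pi * I * (-q) * K)) * exp_mul_exp_sq_inv p q hμ0

lemma theta_div_thetaQ_inv (p q : ℂ) {μ : ℂ} (hμ : 0 < μ.re) :
    theta p q μ⁻¹ / thetaQ p q μ⁻¹ = I * μ⁻¹ * (theta (-q) p μ / thetaQ (-q) p μ) := by
  have h_factor : cexp (2 * Real.pi * I * p * q) * μ ^ (1 / 2 : ℂ) ≠ 0 := by
    simp [ne_zero_of_re_pos hμ]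
  have h_neg_I : (-I)⁻¹ = I := by rw [inv_neg, inv_I, neg_neg]
  rw [theta_inv p q hμ, thetaQ_inv p q hμ, mul_div_mul_left _ _ h_factor,
    div_eq_mul_inv, mul_inv, mul_inv, h_neg_I]
  ring

lemma analyticAt_Ftwo (Λ : ℂ) {p q μ : ℂ} (hμ : 0 < μ.re) (hθ : thetaQ p q μ ≠ 0) :
    AnalyticAt ℂ (Ftwo Λ p q) μ := by
  have h_nhds : {ν : ℂ | 0 < ν.re} ∈ 𝓝 μ := (isOpen_re_gt 0).mem_nhds hμ
  exact analyticAt_const.mul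
    ((((differentiableOn_theta p q).analyticAt h_nhds).div
      ((differentiableOn_thetaQ p q).analyticAt h_nhds) hθ).pow 2)

lemma Ftwo_eq_neg_sq_mul_Ftwo_inv (Λ p q : ℂ) {ν : ℂ} (hν : 0 < ν.re) :
    Ftwo Λ p q ν = -(ν ^ 2 * Ftwo Λ (-q) p ν⁻¹) := by
  have h_quotient := theta_div_thetaQ_inv p q (re_inv_pos hν)
  rw [inv_inv] at h_quotient
  rw [Ftwo, Ftwo, h_quotient, mul_pow, mul_pow, I_sq]
  ring

lemma iteratedDeriv_Ftwo (Λ p q : ℂ) {ν : ℂ} (hν : 0 < ν.re) (n : ℕ) :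
    iteratedDeriv n (Ftwo Λ p q) ν =
      -iteratedDeriv n (fun w ↦ w ^ 2 • Ftwo Λ (-q) p w⁻¹) ν := by
  rw [← iteratedDeriv_fun_neg]
  refine Filter.EventuallyEq.iteratedDeriv_eq n ?_
  filter_upwards [(isOpen_re_gt 0).mem_nhds hν] with w hw
  exact Ftwo_eq_neg_sq_mul_Ftwo_inv Λ p q hw

end Characteristics

theorem statement10_general (Λ : ℂ) (hΛ : Λ ≠ 0) (p q μ : ℂ) (hμ : 0 < μ.re)
    (hθ : thetaQ p q (1 / μ) ≠ 0) :
    Ftwo Λ p q (1 / μ) = -μ ^ (-2 : ℤ) * Ftwo Λ (-q) p μ ∧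
    iteratedDeriv 1 (Ftwo Λ p q) (1 / μ) =
        iteratedDeriv 1 (Ftwo Λ (-q) p) μ - 2 * μ ^ (-1 : ℤ) * Ftwo Λ (-q) p μ ∧
    iteratedDeriv 2 (Ftwo Λ p q) (1 / μ) =
        -μ ^ 2 * iteratedDeriv 2 (Ftwo Λ (-q) p) μ + 2 * μ * iteratedDeriv 1 (Ftwo Λ (-q) p) μ -
          2 * Ftwo Λ (-q) p μ ∧
    iteratedDeriv 3 (Ftwo Λ p q) (1 / μ) = μ ^ 4 * iteratedDeriv 3 (Ftwo Λ (-q) p) μ ∧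
    iteratedDeriv 4 (Ftwo Λ p q) (1 / μ) =
        -μ ^ 6 * iteratedDeriv 4 (Ftwo Λ (-q) p) μ -
          4 * μ ^ 5 * iteratedDeriv 3 (Ftwo Λ (-q) p) μ := by
  have hμ0 := Complex.ne_zero_of_re_pos hμ
  rw [one_div] at hθ ⊢
  have hG : AnalyticAt ℂ (Ftwo Λ (-q) p) (μ⁻¹)⁻¹ := by
    rw [thetaQ_inv p q hμ] at hθ
    rw [inv_inv]
    exact analyticAt_Ftwo Λ hμ (right_ne_zero_of_mul (right_ne_zero_of_mul hθ))
  have hμ_inv := re_inv_pos hμ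
  have hμ_inv0 := inv_ne_zero hμ0
  simp only [iteratedDeriv_Ftwo Λ p q hμ_inv, iteratedDeriv_one_sq_smul_inv hμ_inv0 hG,
    iteratedDeriv_two_sq_smul_inv hμ_inv0 hG, iteratedDeriv_three_sq_smul_inv hμ_inv0 hG,
    iteratedDeriv_four_sq_smul_inv hμ_inv0 hG, Ftwo_eq_neg_sq_mul_Ftwo_inv Λ p q hμ_inv, inv_inv]
  simp only [smul_eq_mul]
  refine ⟨?_, ?_, ?_, ?_, ?_⟩
  · simp [zpow_neg]
  · simp [zpow_neg]
  · ring
  · ring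
  · ring

/-- Lemma 5.10: behavior of `F[p,q]` and its μ-derivatives up to order 4 under
`iμ ↦ i/μ`, expressed through `F[−q,p]`. -/
theorem statement10 (Λ : ℂ) (hΛ : Λ ≠ 0) (p q μ : ℂ) (hμ : 0 < μ.re)
    (hθ : ∀ ν : ℂ, 0 < ν.re → thetaQ p q ν ≠ 0) :
    Ftwo Λ p q (1 / μ) = -μ ^ (-2 : ℤ) * Ftwo Λ (-q) p μ ∧
    iteratedDeriv 1 (Ftwo Λ p q) (1 / μ) =
        iteratedDeriv 1 (Ftwo Λ (-q) p) μ - 2 * μ ^ (-1 : ℤ) * Ftwo Λ (-q) p μ ∧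
    iteratedDeriv 2 (Ftwo Λ p q) (1 / μ) =
        -μ ^ 2 * iteratedDeriv 2 (Ftwo Λ (-q) p) μ + 2 * μ * iteratedDeriv 1 (Ftwo Λ (-q) p) μ -
          2 * Ftwo Λ (-q) p μ ∧
    iteratedDeriv 3 (Ftwo Λ p q) (1 / μ) = μ ^ 4 * iteratedDeriv 3 (Ftwo Λ (-q) p) μ ∧
    iteratedDeriv 4 (Ftwo Λ p q) (1 / μ) =
        -μ ^ 6 * iteratedDeriv 4 (Ftwo Λ (-q) p) μ -
          4 * μ ^ 5 * iteratedDeriv 3 (Ftwo Λ (-q) p) μ :=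
  statement10_general Λ hΛ p q μ hμ (hθ (1 / μ) (one_div μ ▸ re_inv_pos hμ))

end
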